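/- Every Halin graph has treewidth exactly 3. -/

import Mathlib

open SimpleGraph

/-- A planar (straight-line) embedding of a graph in the plane: vertices are
mapped injectively to points, edges are drawn as straight segments (by Fáry's
theorem this is no loss of generality for simple planar graphs), distinct edges
meet only in common endpoints, and no vertex lies in the interior of an edge. -/
structure StraightEmbedding {V : Type} (G : SimpleGraph V) where
  pos : V → ℝ × ℝ
  inj : Function.Injective pos
  no_cross : ∀ a b c d : V, G.Adj a b → G.Adj c d → (s(a, b) : Sym2 V) ≠ s(c, d) →
    segment ℝ (pos a) (pos b) ∩ segment ℝ (pos c) (pos d) ⊆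
      pos '' (({a, b} : Set V) ∩ ({c, d} : Set V))
  vertex_off_edge : ∀ v a b : V, G.Adj a b → v ≠ a → v ≠ b →
    pos v ∉ segment ℝ (pos a) (pos b)

/-- A vertex lies on the outer (exterior) face of an embedding iff some ray
from it reaches infinity without crossing the drawing. -/
def OnOuterFace {V : Type} {G : SimpleGraph V} (emb : StraightEmbedding G) (v : V) : Prop :=
  ∃ d : ℝ × ℝ, d ≠ 0 ∧ ∀ t : ℝ, 0 < t → ∀ a b : V, G.Adj a b →
    emb.pos v + t • d ∉ segment ℝ (emb.pos a) (emb.pos b)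

/-- `IsKOuterplanar k V G`: `G` admits a `k`-outerplanar embedding. A
`1`-outerplanar embedding is planar with all vertices on the outer face; a
`k`-outerplanar embedding (`k ≥ 2`) is planar such that deleting the vertices
on the outer face leaves a `(k-1)`-outerplanar graph. -/
def IsKOuterplanar : ℕ → ∀ (V : Type), SimpleGraph V → Prop
  | 0, _, _ => False
  | 1, _, G => ∃ emb : StraightEmbedding G, ∀ v, OnOuterFace emb v
  | (k + 2), _, G => ∃ emb : StraightEmbedding G,
      IsKOuterplanar (k + 1) _ (G.induce {v | ¬ OnOuterFace emb v})

/-- Degree of a vertex (cardinality of its neighbour set). -/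
noncomputable def degB {V : Type} (G : SimpleGraph V) (v : V) : ℕ :=
  (G.neighborSet v).ncard

/-- `G` is a Halin graph: it is the (planar) union of a tree `T` on at least 4
vertices without degree-2 vertices and a cycle `C` through all leaves of `T`. -/
def IsHalin {V : Type} (G : SimpleGraph V) : Prop :=
  ∃ T C : SimpleGraph V,
    T.IsTree ∧
    4 ≤ Nat.card V ∧
    (∀ v, degB T v ≠ 2) ∧
    (∀ v, degB T v = 1 → degB C v = 2) ∧
    (∀ v, degB T v ≠ 1 → degB C v = 0) ∧
    (C.induce {v | degB T v = 1}).Connected ∧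
    (∀ a b, ¬ (T.Adj a b ∧ C.Adj a b)) ∧
    G = T ⊔ C ∧
    Nonempty (StraightEmbedding G)

/-- A tree decomposition of `G` with index (node) type `ι`. -/
structure TreeDecomp {V : Type} (G : SimpleGraph V) (ι : Type) where
  tree : SimpleGraph ι
  isTree : tree.IsTree
  bag : ι → Set V
  mem_bag : ∀ v : V, ∃ t, v ∈ bag t
  edge_bag : ∀ a b : V, G.Adj a b → ∃ t, a ∈ bag t ∧ b ∈ bag t
  coherence : ∀ v : V, (tree.induce {t | v ∈ bag t}).Connected

/-- `G` has treewidth at most `k`: some tree decomposition has all bags of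
size at most `k + 1`. -/
def TreewidthLE {V : Type} (G : SimpleGraph V) (k : ℕ) : Prop :=
  ∃ (ι : Type) (D : TreeDecomp G ι), ∀ t, (D.bag t).ncard ≤ k + 1

/-!
Lower bound: every vertex of a Halin graph has degree at least three. Root a tree decomposition; a
vertex whose bags begin farthest from the root has its whole closed neighbourhood in a single bag,
which therefore has at least four elements.

Upper bound: cut the tree along an edge, and let a branch be the side avoiding the leaf `l 0`. If
the leaves of a branch were not consecutive on the leaf cycle, the drawing would contain a
subdivision of `K₃,₃`, which counting crossings of walks with vertical rays modulo two excludes. So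
a branch at `v` with leaves `l i, …, l j` is separated from the rest of the graph by `v`, `l i` and
`l j`, and tree decompositions of smaller branches can be glued along such triples using bags of
four vertices.
-/

namespace Halin

section Steps

variable {α : Type*} [LinearOrder α]

/-- The indicator of `x < y` with values in `ZMod 2`, for counting crossings modulo two. -/
def step (x y : α) : ZMod 2 := if x < y then 1 else 0

lemma step_add_step_swap {x y : α} (h : x ≠ y) : step x y + step y x = 1 := by
  rcases lt_or_gt_of_ne h with h | h <;> simp [step, h, h.not_gt]

lemma step_add_step_eq_zero_of_notMem_uIcc {a b x : α} (h : x ∉ Set.uIcc a b) :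
    step a x + step b x = 0 := by
  have hiff : a < x ↔ b < x := by grind [Set.mem_uIcc]
  simpa only [step, hiff] using CharTwo.add_self_eq_zero _

/-- If `S` is constant on the intersection of two intervals, each endpoint lying strictly
inside the other interval contributes the same value, and there are evenly many of them. -/
lemma sum_step_mul_eq_zero {p q a b : α} {S : α → ZMod 2}
    (hS : ∀ x ∈ Set.uIcc p q ∩ Set.uIcc a b, ∀ y ∈ Set.uIcc p q ∩ Set.uIcc a b, S x = S y)
    (hpa : p ≠ a) (hpb : p ≠ b) (hqa : q ≠ a) (hqb : q ≠ b) :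
    (step a p + step b p) * S p + (step a q + step b q) * S q +
      ((step p a + step q a) * S a + (step p b + step q b) * S b) = 0 := by
  obtain ⟨s, hs⟩ : ∃ s, ∀ x ∈ Set.uIcc p q ∩ Set.uIcc a b, S x = s := by
    rcases (Set.uIcc p q ∩ Set.uIcc a b).eq_empty_or_nonempty with h | ⟨y, hy⟩
    · exact ⟨0, by simp [h]⟩
    · exact ⟨S y, fun x hx => hS x hx y hy⟩
  have replace_left : ∀ x ∈ Set.uIcc p q,
      (step a x + step b x) * S x = (step a x + step b x) * s := fun x hx => by
    by_cases h : x ∈ Set.uIcc a b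
    · rw [hs x ⟨hx, h⟩]
    · simp only [step_add_step_eq_zero_of_notMem_uIcc h, zero_mul]
  have replace_right : ∀ x ∈ Set.uIcc a b,
      (step p x + step q x) * S x = (step p x + step q x) * s := fun x hx => by
    by_cases h : x ∈ Set.uIcc p q
    · rw [hs x ⟨h, hx⟩]
    · simp only [step_add_step_eq_zero_of_notMem_uIcc h, zero_mul]
  rw [replace_left p Set.left_mem_uIcc, replace_left q Set.right_mem_uIcc,
    replace_right a Set.left_mem_uIcc, replace_right b Set.right_mem_uIcc]
  have four : (1 + 1 + (1 + 1) : ZMod 2) = 0 := rfl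
  linear_combination s * (step_add_step_swap hpa + step_add_step_swap hpb +
    step_add_step_swap hqa + step_add_step_swap hqb + four)

end Steps

section Segments

/-- The height over `x` of the line through `a` and `b`; division by zero makes it the constant
`a.2` when the line is vertical. -/
noncomputable def lineAt (a b : ℝ × ℝ) (x : ℝ) : ℝ :=
  a.2 + (b.2 - a.2) / (b.1 - a.1) * (x - a.1)

lemma lineAt_left (a b : ℝ × ℝ) : lineAt a b a.1 = a.2 := by simp [lineAt]

lemma lineAt_right {a b : ℝ × ℝ} (h : a.1 ≠ b.1) : lineAt a b b.1 = b.2 := by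
  rw [lineAt, div_mul_cancel₀ _ (sub_ne_zero.2 h.symm), add_sub_cancel]

lemma continuous_lineAt (a b : ℝ × ℝ) : Continuous (lineAt a b) := by
  unfold lineAt; fun_prop

lemma mk_lineAt_mem_segment {a b : ℝ × ℝ} {x : ℝ} (hx : x ∈ Set.uIcc a.1 b.1) :
    (x, lineAt a b x) ∈ segment ℝ a b := by
  rcases eq_or_ne a.1 b.1 with h | h
  · obtain rfl : x = a.1 := by simpa [← h] using hx
    simpa only [lineAt_left] using left_mem_segment ℝ a b
  · rw [← segment_eq_uIcc, segment_eq_image'] at hx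
    obtain ⟨θ, hθ, rfl⟩ := hx
    rw [segment_eq_image']
    refine ⟨θ, hθ, Prod.ext rfl ?_⟩
    have := sub_ne_zero.2 h.symm
    simp only [lineAt, Prod.snd_add, Prod.smul_snd, Prod.snd_sub, smul_eq_mul]
    field_simp
    ring

/-- The parity of crossings of the vertical upward ray from `p` with the segment `a b`. -/
noncomputable def rayUp (p a b : ℝ × ℝ) : ZMod 2 :=
  (step a.1 p.1 + step b.1 p.1) * step p.2 (lineAt a b p.1)

/-- The parity of crossings of the vertical downward ray from `p` with the segment `a b`. -/
noncomputable def rayDown (p a b : ℝ × ℝ) : ZMod 2 :=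
  (step a.1 p.1 + step b.1 p.1) * step (lineAt a b p.1) p.2

lemma rayUp_add_rayDown {p a b : ℝ × ℝ} (hp : p ∉ segment ℝ a b) :
    rayUp p a b + rayDown p a b = step a.1 p.1 + step b.1 p.1 := by
  by_cases h : p.1 ∈ Set.uIcc a.1 b.1
  · have hne : p.2 ≠ lineAt a b p.1 := fun heq => hp (by
      simpa only [← heq] using mk_lineAt_mem_segment h)
    rw [rayUp, rayDown, ← mul_add, step_add_step_swap hne, mul_one]
  · simp only [rayUp, rayDown, step_add_step_eq_zero_of_notMem_uIcc h, zero_mul, add_zero]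

lemma rayUp_add_rayUp_eq_of_disjoint {p q a b : ℝ × ℝ} (hpq : p.1 ≠ q.1) (hab : a.1 ≠ b.1)
    (hpa : p.1 ≠ a.1) (hpb : p.1 ≠ b.1) (hqa : q.1 ≠ a.1) (hqb : q.1 ≠ b.1)
    (hdisj : Disjoint (segment ℝ p q) (segment ℝ a b)) :
    rayUp p a b + rayUp q a b = rayDown a p q + rayDown b p q := by
  have hne : ∀ z ∈ Set.uIcc p.1 q.1 ∩ Set.uIcc a.1 b.1, lineAt p q z ≠ lineAt a b z :=
    fun z hz heq => Set.disjoint_left.1 hdisj (mk_lineAt_mem_segment hz.1)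
      (heq ▸ mk_lineAt_mem_segment hz.2)
  have hlt : ∀ x ∈ Set.uIcc p.1 q.1 ∩ Set.uIcc a.1 b.1,
      ∀ y ∈ Set.uIcc p.1 q.1 ∩ Set.uIcc a.1 b.1,
      lineAt p q x < lineAt a b x → lineAt p q y < lineAt a b y := by
    intro x hx y hy hxlt
    by_contra! hyle
    obtain ⟨z, hz, heq⟩ :=
      (Set.ordConnected_uIcc.inter Set.ordConnected_uIcc).isPreconnected.intermediate_value₂
        hx hy (continuous_lineAt p q).continuousOn (continuous_lineAt a b).continuousOn
        hxlt.le hyle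
    exact hne z hz heq
  have h := sum_step_mul_eq_zero (S := fun z => step (lineAt p q z) (lineAt a b z))
    (fun x hx y hy => if_congr ⟨hlt x hx y hy, hlt y hy x hx⟩ rfl rfl) hpa hpb hqa hqb
  simp only [lineAt_left, lineAt_right hpq, lineAt_right hab] at h
  exact CharTwo.add_eq_zero.1 h

end Segments

section WalkSums

variable {V : Type*} {G : SimpleGraph V} {a b : V}

/-- The sum over the darts of `w` of a function of their two endpoints. -/
def walkSum {M : Type*} [AddMonoid M] (f : V → V → M) (w : G.Walk a b) : M :=
  (w.darts.map fun d => f d.fst d.snd).sum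

lemma walkSum_add {M : Type*} [AddCommMonoid M] (f g : V → V → M) (w : G.Walk a b) :
    walkSum (fun x y => f x y + g x y) w = walkSum f w + walkSum g w :=
  List.sum_map_add

lemma walkSum_eq_add {R : Type*} [Ring R] [CharP R 2] {f : V → V → R} {g : V → R}
    (w : G.Walk a b)
    (h : ∀ x ∈ w.support, ∀ y ∈ w.support, G.Adj x y → f x y = g x + g y) :
    walkSum f w = g a + g b := by
  induction w with
  | nil => exact (CharTwo.add_self_eq_zero _).symm
  | @cons u v w huv p ih =>
    have hstep : f u v = g u + g v := h u (by simp) v (by simp) huv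
    have htail := ih fun x hx y hy =>
      h x (List.mem_cons_of_mem _ hx) y (List.mem_cons_of_mem _ hy)
    calc walkSum f (.cons huv p) = f u v + walkSum f p := by simp [walkSum]
      _ = (g u + g w) + (g v + g v) := by rw [hstep, htail]; abel
      _ = g u + g w := by rw [CharTwo.add_self_eq_zero, add_zero]

end WalkSums

section Drawings

variable {V : Type} {G : SimpleGraph V}

lemma disjoint_segment (emb : StraightEmbedding G) {p q a b : V} (hpq : G.Adj p q)
    (hab : G.Adj a b) (hdisj : Disjoint ({p, q} : Set V) {a, b}) :
    Disjoint (segment ℝ (emb.pos p) (emb.pos q)) (segment ℝ (emb.pos a) (emb.pos b)) := by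
  rw [Set.disjoint_iff_inter_eq_empty, ← Set.subset_empty_iff]
  refine (emb.no_cross p q a b hpq hab fun h => ?_).trans (by simp [hdisj.inter_eq])
  have hp : p ∈ s(a, b) := h ▸ Sym2.mem_mk_left p q
  exact Set.disjoint_left.1 hdisj (Set.mem_insert p _) (by simpa using hp)

/-- The image of a straight-line embedding under an injective linear map of the plane. -/
def mapEmbedding (emb : StraightEmbedding G) (f : ℝ × ℝ →ₗ[ℝ] ℝ × ℝ)
    (hf : Function.Injective f) : StraightEmbedding G where
  pos v := f (emb.pos v)
  inj := hf.comp emb.inj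
  no_cross a b c d hab hcd hne := by
    simp only [← LinearMap.coe_toAffineMap, ← image_segment]
    rw [← Set.image_inter (by exact hf), ← Set.image_image f.toAffineMap emb.pos]
    exact Set.image_mono (emb.no_cross a b c d hab hcd hne)
  vertex_off_edge v a b hab ha hb := by
    simp only [← LinearMap.coe_toAffineMap, ← image_segment]
    rw [Function.Injective.mem_set_image (by exact hf)]
    exact emb.vertex_off_edge v a b hab ha hb

lemma exists_injective_add_mul {ι : Type*} [Countable ι] {p : ι → ℝ × ℝ}
    (hp : Function.Injective p) : ∃ t : ℝ, Function.Injective fun i => (p i).1 + t * (p i).2 := by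
  obtain ⟨t, ht⟩ := ((Set.countable_range fun ij : ι × ι =>
    -((p ij.1).1 - (p ij.2).1) / ((p ij.1).2 - (p ij.2).2)).dense_compl ℝ).nonempty
  refine ⟨t, fun i j hij => hp ?_⟩
  by_cases h : (p i).2 = (p j).2
  · exact Prod.ext (by simpa only [h, add_left_inj] using hij) h
  · refine absurd ⟨(i, j), ?_⟩ ht
    rw [div_eq_iff (sub_ne_zero.2 h)]
    linear_combination -hij

lemma exists_embedding_injective_fst [Countable V] (emb : StraightEmbedding G) :
    ∃ emb' : StraightEmbedding G, Function.Injective fun v => (emb'.pos v).1 := by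
  obtain ⟨t, ht⟩ := exists_injective_add_mul emb.inj
  let shear : ℝ × ℝ →ₗ[ℝ] ℝ × ℝ :=
    (LinearMap.fst ℝ ℝ ℝ + t • LinearMap.snd ℝ ℝ ℝ).prod (LinearMap.snd ℝ ℝ ℝ)
  have hshear : Function.Injective shear := fun p q h => by
    obtain ⟨h₁, h₂⟩ : p.1 + t * p.2 = q.1 + t * q.2 ∧ p.2 = q.2 := by simpa [shear] using h
    exact Prod.ext (by simpa only [h₂, add_left_inj] using h₁) h₂
  exact ⟨mapEmbedding emb shear hshear, ht⟩

/-- The parity of crossings of the upward ray from the vertex `z` with the walk `w`. -/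
noncomputable def walkUp (emb : StraightEmbedding G) (z : V) {a b : V} (w : G.Walk a b) :
    ZMod 2 :=
  walkSum (fun x y => rayUp (emb.pos z) (emb.pos x) (emb.pos y)) w

/-- The parity of crossings of the downward ray from the vertex `z` with the walk `w`. -/
noncomputable def walkDown (emb : StraightEmbedding G) (z : V) {a b : V} (w : G.Walk a b) :
    ZMod 2 :=
  walkSum (fun x y => rayDown (emb.pos z) (emb.pos x) (emb.pos y)) w

/-- The indicator that the vertex `x` is drawn strictly to the left of the vertex `y`. -/
noncomputable def leftOf (emb : StraightEmbedding G) (x y : V) : ZMod 2 :=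
  step (emb.pos x).1 (emb.pos y).1

lemma walkUp_add_walkDown (emb : StraightEmbedding G) {a b z : V} {w : G.Walk a b}
    (hz : z ∉ w.support) :
    walkUp emb z w + walkDown emb z w = leftOf emb a z + leftOf emb b z := by
  rw [walkUp, walkDown, ← walkSum_add]
  exact walkSum_eq_add (g := fun x => leftOf emb x z) w fun x hx y hy hxy => rayUp_add_rayDown <|
    emb.vertex_off_edge z x y hxy (fun h => hz (h ▸ hx)) (fun h => hz (h ▸ hy))

lemma walkUp_add_walkUp_eq (emb : StraightEmbedding G)
    (hfst : Function.Injective fun v => (emb.pos v).1) {a b c d : V} {w : G.Walk a b}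
    {w' : G.Walk c d} (hww' : w.support.Disjoint w'.support) :
    walkUp emb a w' + walkUp emb b w' = walkDown emb c w + walkDown emb d w := by
  have edge_edge : ∀ x ∈ w.support, ∀ y ∈ w.support, G.Adj x y →
      ∀ u ∈ w'.support, ∀ v ∈ w'.support, G.Adj u v →
      rayUp (emb.pos x) (emb.pos u) (emb.pos v) + rayUp (emb.pos y) (emb.pos u) (emb.pos v) =
        rayDown (emb.pos u) (emb.pos x) (emb.pos y) +
          rayDown (emb.pos v) (emb.pos x) (emb.pos y) := by
    intro x hx y hy hxy u hu v hv huv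
    have hne : ∀ s ∈ w.support, ∀ r ∈ w'.support, s ≠ r := fun s hs r hr h => hww' hs (h ▸ hr)
    refine rayUp_add_rayUp_eq_of_disjoint (hfst.ne hxy.ne) (hfst.ne huv.ne)
      (hfst.ne (hne x hx u hu)) (hfst.ne (hne x hx v hv)) (hfst.ne (hne y hy u hu))
      (hfst.ne (hne y hy v hv)) (disjoint_segment emb hxy huv ?_)
    rw [Set.disjoint_left]
    grind
  have edge_walk : ∀ x ∈ w.support, ∀ y ∈ w.support, G.Adj x y →
      rayDown (emb.pos c) (emb.pos x) (emb.pos y) + rayDown (emb.pos d) (emb.pos x) (emb.pos y) =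
        walkUp emb x w' + walkUp emb y w' := by
    intro x hx y hy hxy
    rw [walkUp, walkUp, ← walkSum_add]
    exact (walkSum_eq_add (g := fun u => rayDown (emb.pos u) (emb.pos x) (emb.pos y)) w'
      (edge_edge x hx y hy hxy)).symm
  rw [walkDown, walkDown, ← walkSum_add]
  exact (walkSum_eq_add (g := fun x => walkUp emb x w') w edge_walk).symm

/-- Let `U k` and `D k` count the crossings of the upward and downward rays from the `b j` with the
walks from `a k`. Disjointness gives `U k = D i` for `i ≠ k`, while `U k + D k` counts each pair of
the `b j` once, the contributions of `a k` cancelling. -/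
theorem not_exists_subdivision_K33 [Countable V] (emb : StraightEmbedding G) (a b : Fin 3 → V)
    (w : ∀ i j, G.Walk (a i) (b j))
    (hw : ∀ i j k l, i ≠ k → j ≠ l → (w i j).support.Disjoint (w k l).support) : False := by
  obtain ⟨emb, hfst⟩ := exists_embedding_injective_fst emb
  let U (k : Fin 3) : ZMod 2 :=
    ∑ j, (walkUp emb (b j) (w k (j + 1)) + walkUp emb (b j) (w k (j + 2)))
  let D (k : Fin 3) : ZMod 2 :=
    ∑ j, (walkDown emb (b j) (w k (j + 1)) + walkDown emb (b j) (w k (j + 2)))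
  have two : (2 : ZMod 2) = 0 := rfl
  have eq_of_ne : ∀ i k, i ≠ k → U k = D i := by
    intro i k hik
    have h := fun j l hjl => walkUp_add_walkUp_eq emb hfst (hw i j k l hik hjl)
    simp only [U, D, Fin.sum_univ_three, Fin.reduceAdd]
    linear_combination h 0 1 (by decide) + h 0 2 (by decide) + h 1 2 (by decide) +
      h 1 0 (by decide) + h 2 0 (by decide) + h 2 1 (by decide) +
      two * (walkDown emb (a k) (w i 0) + walkDown emb (a k) (w i 1) +
        walkDown emb (a k) (w i 2) - walkUp emb (a i) (w k 0) - walkUp emb (a i) (w k 1) -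
        walkUp emb (a i) (w k 2))
  have add_eq_one : ∀ k, U k + D k = 1 := by
    intro k
    have h : ∀ j l, j ≠ l → walkUp emb (b j) (w k l) + walkDown emb (b j) (w k l) =
        leftOf emb (a k) (b j) + leftOf emb (b l) (b j) := fun j l hjl =>
      walkUp_add_walkDown emb fun hmem =>
        hw (k + 1) j k l (by simp) hjl (w (k + 1) j).end_mem_support hmem
    have hb : ∀ j l, j ≠ l → leftOf emb (b j) (b l) + leftOf emb (b l) (b j) = 1 := by
      refine fun j l hjl => step_add_step_swap (hfst.ne fun hb => ?_)
      have hmem : b j ∈ (w 1 l).support := by simp only [hb, Walk.end_mem_support]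
      exact hw 0 j 1 l (by decide) hjl (w 0 j).end_mem_support hmem
    simp only [U, D, Fin.sum_univ_three, Fin.reduceAdd]
    linear_combination h 0 1 (by decide) + h 0 2 (by decide) + h 1 2 (by decide) +
      h 1 0 (by decide) + h 2 0 (by decide) + h 2 1 (by decide) +
      hb 0 1 (by decide) + hb 1 2 (by decide) + hb 0 2 (by decide) +
      two * (1 + leftOf emb (a k) (b 0) + leftOf emb (a k) (b 1) + leftOf emb (a k) (b 2))
  have : (1 : ZMod 2) = 0 := calc
    1 = U 1 + D 1 := (add_eq_one 1).symm
    _ = U 2 + U 2 := by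
      rw [eq_of_ne 0 1 (by decide), ← eq_of_ne 0 2 (by decide), ← eq_of_ne 1 2 (by decide)]
    _ = 0 := CharTwo.add_self_eq_zero _
  exact one_ne_zero this

end Drawings

section LowerBound

lemma exists_isPath_forall_mem {V : Type*} {G : SimpleGraph V} {S : Set V}
    (hS : (G.induce S).Preconnected) {a b : V} (ha : a ∈ S) (hb : b ∈ S) :
    ∃ p : G.Walk a b, p.IsPath ∧ ∀ z ∈ p.support, z ∈ S := by
  obtain ⟨p, hp⟩ := hS.exists_isPath ⟨a, ha⟩ ⟨b, hb⟩
  let f : G.induce S ↪g G := Embedding.induce S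
  have hsupp : ∀ z ∈ (p.map f.toHom).support, z ∈ S := by
    rw [Walk.support_map, List.forall_mem_map]
    exact fun x _ => x.2
  exact ⟨p.map f.toHom, hp.map f.injective, hsupp⟩

lemma exists_isPath_append_of_dist_le {ι : Type*} {T : SimpleGraph ι} (hT : T.Connected)
    {S : Set ι} (hS : (T.induce S).Preconnected) {r s t : ι} (ht : t ∈ S) (hs : s ∈ S)
    (hmin : ∀ z ∈ S, T.dist r t ≤ T.dist r z) :
    ∃ (p : T.Walk r t) (q : T.Walk t s), (p.append q).IsPath ∧ (∀ z ∈ q.support, z ∈ S) ∧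
      ∀ z ∈ p.support, z ≠ t → T.dist r z < T.dist r t := by
  classical
  obtain ⟨p, hp, hlen⟩ := hT.exists_path_of_dist r t
  obtain ⟨q, hq, hqS⟩ := exists_isPath_forall_mem hS ht hs
  have hlt : ∀ z ∈ p.support, z ≠ t → T.dist r z < T.dist r t := fun z hz hzt =>
    (dist_le (p.takeUntil z hz)).trans_lt (hlen ▸ p.length_takeUntil_lt_length hz hzt)
  refine ⟨p, q, ?_, hqS, hlt⟩
  rw [Walk.isPath_def, Walk.support_append, List.nodup_append]
  refine ⟨hp.support_nodup, hq.support_nodup.tail, ?_⟩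
  rintro z hz _ hzq rfl
  have hzt : z ≠ t := by
    rintro rfl
    have hnodup := hq.support_nodup
    rw [← Walk.cons_tail_support] at hnodup
    exact (List.nodup_cons.1 hnodup).1 hzq
  exact (hmin z (hqS z (List.mem_of_mem_tail hzq))).not_gt (hlt z hz hzt)

/-- Root the decomposition tree; the vertex whose subtree of bags starts farthest from the root
has all its neighbours in the topmost of its bags. -/
lemma exists_insert_neighborSet_subset_bag {V : Type} [Finite V] [Nonempty V] {G : SimpleGraph V}
    {ι : Type} (D : TreeDecomp G ι) : ∃ v t, insert v (G.neighborSet v) ⊆ D.bag t := by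
  obtain ⟨r⟩ := D.isTree.1.nonempty
  have exists_top : ∀ v, ∃ t, v ∈ D.bag t ∧
      ∀ s, v ∈ D.bag s → D.tree.dist r t ≤ D.tree.dist r s := fun v => by
    obtain ⟨t, ht⟩ := exists_minimalFor_of_wellFoundedLT _ (D.tree.dist r) (D.mem_bag v)
    exact ⟨t, ht.1, fun s hs => (le_total _ _).elim id (ht.2 hs)⟩
  choose top mem_top top_le using exists_top
  obtain ⟨v, hv⟩ := Finite.exists_max fun v => D.tree.dist r (top v)
  refine ⟨v, top v, Set.insert_subset (mem_top v) fun w hw => ?_⟩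
  obtain ⟨s, hsv, hsw⟩ := D.edge_bag v w hw
  obtain ⟨p, q, hpq, -, -⟩ := exists_isPath_append_of_dist_le D.isTree.1
    (D.coherence v).preconnected (mem_top v) hsv (top_le v)
  obtain ⟨p', q', hpq', hq', hp'⟩ := exists_isPath_append_of_dist_le D.isTree.1
    (D.coherence w).preconnected (mem_top w) hsw (top_le w)
  have hmem : top v ∈ (p'.append q').support := by
    rw [(D.isTree.existsUnique_path r s).unique hpq' hpq, Walk.mem_support_append_iff]
    exact Or.inl p.end_mem_support
  rcases (Walk.mem_support_append_iff _ _).1 hmem with h | h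
  · by_cases heq : top v = top w
    · exact heq ▸ mem_top w
    · exact absurd (hp' _ h heq) (hv w).not_gt
  · exact hq' _ h

theorem not_treewidthLE_of_lt_degB {V : Type} [Finite V] [Nonempty V] {G : SimpleGraph V} {k : ℕ}
    (hdeg : ∀ v, k < degB G v) : ¬ TreewidthLE G k := by
  rintro ⟨ι, D, hD⟩
  obtain ⟨v, t, hvt⟩ := exists_insert_neighborSet_subset_bag D
  have hcard := Set.ncard_le_ncard hvt (Set.toFinite _)
  rw [Set.ncard_insert_of_notMem (G.notMem_neighborSet_self) (Set.toFinite _)] at hcard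
  exact absurd (hcard.trans (hD t)) (by simpa [degB] using hdeg v)

end LowerBound

section Gluing

variable {α β : Type*} {G : SimpleGraph α} {H : SimpleGraph β}

lemma reachable_of_forall_adj_reachable {f : α → β}
    (hf : ∀ a b, G.Adj a b → H.Reachable (f a) (f b)) {a b : α} (h : G.Reachable a b) :
    H.Reachable (f a) (f b) := by
  simp only [reachable_iff_reflTransGen] at hf h ⊢
  exact Relation.ReflTransGen.lift' f hf _ _ h

lemma isAcyclic_sum (hG : G.IsAcyclic) (hH : H.IsAcyclic) : (G ⊕g H).IsAcyclic := by
  rw [isAcyclic_iff_forall_adj_isBridge] at *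
  rintro (a | a) (b | b) hab
  · have hbridge := hG (sum_adj_inl.1 hab)
    rw [isBridge_iff] at hbridge ⊢
    refine fun hr => hbridge
      (reachable_of_forall_adj_reachable (f := Sum.elim id fun _ => a) ?_ hr)
    rintro (x | x) (y | y) hxy
    · exact Adj.reachable (by simpa [deleteEdges_adj] using hxy)
    · simp [deleteEdges_adj] at hxy
    · simp [deleteEdges_adj] at hxy
    · exact Reachable.rfl
  · simp at hab
  · simp at hab
  · have hbridge := hH (sum_adj_inr.1 hab)
    rw [isBridge_iff] at hbridge ⊢
    refine fun hr => hbridge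
      (reachable_of_forall_adj_reachable (f := Sum.elim (fun _ => a) id) ?_ hr)
    rintro (x | x) (y | y) hxy
    · exact Reachable.rfl
    · simp [deleteEdges_adj] at hxy
    · simp [deleteEdges_adj] at hxy
    · exact Adj.reachable (by simpa [deleteEdges_adj] using hxy)

lemma isTree_sum_sup_edge (hG : G.IsTree) (hH : H.IsTree) (a : α) (b : β) :
    ((G ⊕g H) ⊔ edge (.inl a) (.inr b)).IsTree :=
  ⟨hG.1.sum_sup_edge hH.1,
    (isAcyclic_sum hG.2 hH.2).sup_edge_of_not_reachable (not_reachable_sum_inl_inr a b)⟩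

lemma preconnected_induce_image (f : G →g H) {S : Set α} (hS : (G.induce S).Preconnected) :
    (H.induce (f '' S)).Preconnected := by
  let g : G.induce S →g H.induce (f '' S) :=
    { toFun := fun x => ⟨f x, Set.mem_image_of_mem f x.2⟩
      map_rel' := fun h => f.map_adj h }
  refine hS.map g ?_
  rintro ⟨_, x, hx, rfl⟩
  exact ⟨⟨x, hx⟩, rfl⟩

lemma preconnected_induce_sum_sup_edge {S : Set α} {S' : Set β} {a : α} {b : β}
    (hS : (G.induce S).Preconnected) (hS' : (H.induce S').Preconnected)
    (hab : S.Nonempty → S'.Nonempty → a ∈ S ∧ b ∈ S') :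
    (((G ⊕g H) ⊔ edge (.inl a) (.inr b)).induce (Sum.inl '' S ∪ Sum.inr '' S')).Preconnected := by
  let K := (G ⊕g H) ⊔ edge (.inl a) (.inr b)
  have hl : (K.induce (Sum.inl '' S)).Preconnected :=
    preconnected_induce_image ((Hom.ofLE le_sup_left).comp Embedding.sumInl.toHom) hS
  have hr : (K.induce (Sum.inr '' S')).Preconnected :=
    preconnected_induce_image ((Hom.ofLE le_sup_left).comp Embedding.sumInr.toHom) hS'
  rcases S.eq_empty_or_nonempty with rfl | hne
  · rwa [Set.image_empty, Set.empty_union]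
  rcases S'.eq_empty_or_nonempty with rfl | hne'
  · rwa [Set.image_empty, Set.union_empty]
  obtain ⟨ha, hb⟩ := hab hne hne'
  exact (connected_induce_union hl hr (Set.mem_image_of_mem _ ha) (Set.mem_image_of_mem _ hb)
    (by simp [K, edge_adj])).preconnected

variable {V : Type*} {Γ : SimpleGraph V} {X Y A B : Set V}

/-- A tree decomposition of the subgraph of `Γ` induced on `X`, with a distinguished node, the
root, at which decompositions are joined. -/
structure RootedDecomp (Γ : SimpleGraph V) (X : Set V) (ι : Type) where
  tree : SimpleGraph ι
  isTree : tree.IsTree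
  root : ι
  bag : ι → Set V
  bag_subset : ∀ t, bag t ⊆ X
  mem_bag : ∀ x ∈ X, ∃ t, x ∈ bag t
  edge_bag : ∀ a ∈ X, ∀ b ∈ X, Γ.Adj a b → ∃ t, a ∈ bag t ∧ b ∈ bag t
  coherence : ∀ v, (tree.induce {t | v ∈ bag t}).Preconnected

/-- The one-node decomposition with a single bag. -/
def RootedDecomp.single (Γ : SimpleGraph V) (X : Set V) : RootedDecomp Γ X Unit where
  tree := ⊥
  isTree := .of_subsingleton
  root := ()
  bag _ := X
  bag_subset _ := subset_rfl
  mem_bag _ hx := ⟨(), hx⟩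
  edge_bag _ ha _ hb _ := ⟨(), ha, hb⟩
  coherence _ := .of_subsingleton

/-- Two rooted decompositions whose vertex sets meet only inside both root bags, joined by an edge
between their roots. -/
def RootedDecomp.glue {ι κ : Type} (D : RootedDecomp Γ X ι) (E : RootedDecomp Γ Y κ)
    (hmeet : X ∩ Y ⊆ D.bag D.root ∩ E.bag E.root)
    (hcross : ∀ a ∈ X, ∀ b ∈ Y, Γ.Adj a b → b ∈ X ∨ a ∈ Y) :
    RootedDecomp Γ (X ∪ Y) (ι ⊕ κ) where
  tree := (D.tree ⊕g E.tree) ⊔ edge (.inl D.root) (.inr E.root)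
  isTree := isTree_sum_sup_edge D.isTree E.isTree _ _
  root := .inl D.root
  bag := Sum.elim D.bag E.bag
  bag_subset := by
    rintro (t | t)
    · exact (D.bag_subset t).trans Set.subset_union_left
    · exact (E.bag_subset t).trans Set.subset_union_right
  mem_bag := by
    rintro x (hx | hx)
    · exact Sum.exists.2 (.inl (D.mem_bag x hx))
    · exact Sum.exists.2 (.inr (E.mem_bag x hx))
  edge_bag := by
    have left : ∀ a ∈ X, ∀ b ∈ X, Γ.Adj a b →
        ∃ t, a ∈ Sum.elim D.bag E.bag t ∧ b ∈ Sum.elim D.bag E.bag t :=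
      fun a ha b hb hab => Sum.exists.2 (.inl (D.edge_bag a ha b hb hab))
    have right : ∀ a ∈ Y, ∀ b ∈ Y, Γ.Adj a b →
        ∃ t, a ∈ Sum.elim D.bag E.bag t ∧ b ∈ Sum.elim D.bag E.bag t :=
      fun a ha b hb hab => Sum.exists.2 (.inr (E.edge_bag a ha b hb hab))
    rintro a (ha | ha) b (hb | hb) hab
    · exact left a ha b hb hab
    · exact (hcross a ha b hb hab).elim (left a ha b · hab) (right a · b hb hab)
    · exact (hcross b hb a ha hab.symm).elim (left a · b hb hab) (right a ha b · hab)
    · exact right a ha b hb hab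
  coherence v := by
    have hnodes : {t | v ∈ Sum.elim D.bag E.bag t} =
        Sum.inl '' {t | v ∈ D.bag t} ∪ Sum.inr '' {t | v ∈ E.bag t} := by
      ext (t | t) <;> simp
    rw [hnodes]
    refine preconnected_induce_sum_sup_edge (D.coherence v) (E.coherence v) ?_
    rintro ⟨s, hs⟩ ⟨t, ht⟩
    exact hmeet ⟨D.bag_subset s hs, E.bag_subset t ht⟩

/-- The subgraph of `Γ` induced on `X` has a tree decomposition of width at most `k`, one bag of
which contains `B`. -/
def HasRootedDecomp (Γ : SimpleGraph V) (k : ℕ) (X B : Set V) : Prop :=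
  ∃ (ι : Type) (D : RootedDecomp Γ X ι), B ⊆ D.bag D.root ∧ ∀ t, (D.bag t).ncard ≤ k + 1

variable {k : ℕ}

lemma HasRootedDecomp.mono (h : HasRootedDecomp Γ k X B) (hAB : A ⊆ B) :
    HasRootedDecomp Γ k X A := by
  obtain ⟨ι, D, hroot, hcard⟩ := h
  exact ⟨ι, D, hAB.trans hroot, hcard⟩

lemma hasRootedDecomp_self (hX : X.ncard ≤ k + 1) : HasRootedDecomp Γ k X X :=
  ⟨Unit, .single Γ X, subset_rfl, fun _ => hX⟩

lemma HasRootedDecomp.glue (hX : HasRootedDecomp Γ k X A) (hY : HasRootedDecomp Γ k Y B)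
    (hmeet : X ∩ Y ⊆ A ∩ B) (hcross : ∀ a ∈ X, ∀ b ∈ Y, Γ.Adj a b → b ∈ X ∨ a ∈ Y) :
    HasRootedDecomp Γ k (X ∪ Y) A := by
  obtain ⟨ι, D, hA, hD⟩ := hX
  obtain ⟨κ, E, hB, hE⟩ := hY
  exact ⟨ι ⊕ κ, D.glue E (hmeet.trans (Set.inter_subset_inter hA hB)) hcross, hA,
    Sum.forall.2 ⟨hD, hE⟩⟩

lemma HasRootedDecomp.addBag (hX : HasRootedDecomp Γ k X B) (hA : A.ncard ≤ k + 1)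
    (hmeet : A ∩ X ⊆ B) (hcross : ∀ a ∈ A, ∀ x ∈ X, Γ.Adj a x → x ∈ A ∨ a ∈ X) :
    HasRootedDecomp Γ k (A ∪ X) A :=
  (hasRootedDecomp_self hA).glue hX (Set.subset_inter Set.inter_subset_left hmeet) hcross

lemma HasRootedDecomp.treewidthLE {V : Type} {Γ : SimpleGraph V} {B : Set V}
    (h : HasRootedDecomp Γ k Set.univ B) : TreewidthLE Γ k := by
  obtain ⟨ι, D, -, hcard⟩ := h
  refine ⟨ι, ⟨D.tree, D.isTree, D.bag, fun v => D.mem_bag v trivial,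
    fun a b => D.edge_bag a trivial b trivial, fun v => ?_⟩, hcard⟩
  obtain ⟨t, ht⟩ := D.mem_bag v trivial
  exact connected_iff _ |>.2 ⟨D.coherence v, ⟨t, ht⟩⟩

end Gluing

section Branches

variable {V : Type} {T : SimpleGraph V} {v c a b w : V}

/-- The vertices on the side of `c` once the edge `vc` of the tree `T` is cut. -/
def side (T : SimpleGraph V) (v c : V) : Set V :=
  ((T.deleteEdges {s(v, c)}).connectedComponentMk c).supp

lemma mem_side_iff : w ∈ side T v c ↔ (T.deleteEdges {s(v, c)}).Reachable w c := by
  rw [side, ConnectedComponent.mem_supp_iff, ConnectedComponent.eq]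

lemma mem_side_self : c ∈ side T v c :=
  mem_side_iff.2 .rfl

lemma preconnected_induce_side : (T.induce (side T v c)).Preconnected :=
  ((T.deleteEdges {s(v, c)}).connectedComponentMk c).connected_toSimpleGraph.preconnected.mono
    (comap_monotone _ (deleteEdges_le _))

lemma notMem_side (hT : T.IsAcyclic) (h : T.Adj v c) : v ∉ side T v c := fun hv =>
  isBridge_iff.1 (isAcyclic_iff_forall_adj_isBridge.1 hT h) (mem_side_iff.1 hv)

lemma mem_side_or_eq_of_adj (ha : a ∈ side T v c) (hab : T.Adj a b) :
    b ∈ side T v c ∨ a = c ∧ b = v := by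
  by_cases he : s(a, b) = s(v, c)
  · rcases Sym2.eq_iff.1 he with ⟨-, rfl⟩ | ⟨rfl, rfl⟩
    · exact .inl mem_side_self
    · exact .inr ⟨rfl, rfl⟩
  · have hba : (T.deleteEdges {s(v, c)}).Adj b a := deleteEdges_adj.2 ⟨hab, he⟩ |>.symm
    exact .inl (mem_side_iff.2 (hba.reachable.trans (mem_side_iff.1 ha)))

lemma exists_adj_mem_side (hT : T.Preconnected) (h : w ≠ v) : ∃ c, T.Adj v c ∧ w ∈ side T v c := by
  obtain ⟨p, hp⟩ := hT.exists_isPath v w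
  cases p with
  | nil => exact absurd rfl h
  | @cons _ c _ hc q =>
    refine ⟨c, hc, mem_side_iff.2 (Reachable.symm ⟨q.toDeleteEdges _ ?_⟩)⟩
    rintro e he rfl
    exact ((Walk.cons_isPath_iff _ _).1 hp).2 (q.fst_mem_support_of_mem_edges he)

lemma mem_side_swap_iff (hT : T.IsTree) (h : T.Adj v c) : w ∈ side T c v ↔ w ∉ side T v c := by
  constructor
  · intro hw hw'
    rw [mem_side_iff, Sym2.eq_swap] at hw
    exact notMem_side hT.2 h (mem_side_iff.2 (hw.symm.trans (mem_side_iff.1 hw')))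
  · suffices w ∈ side T v c ∨ w ∈ side T c v from this.resolve_left
    obtain ⟨p⟩ := hT.1.preconnected w c
    induction p with
    | nil => exact .inl mem_side_self
    | cons hab _ ih =>
      rcases ih h with hb | hb
      · refine (mem_side_or_eq_of_adj hb hab.symm).imp_right ?_
        rintro ⟨-, rfl⟩
        exact mem_side_self
      · refine (mem_side_or_eq_of_adj hb hab.symm).symm.imp_left ?_
        rintro ⟨-, rfl⟩
        exact mem_side_self

lemma eq_of_adj_of_degB_eq_one (hc : degB T c = 1) (ha : T.Adj c a) (hb : T.Adj c b) : a = b :=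
  (Set.ncard_le_one_iff (Set.finite_of_ncard_pos (one_pos.trans_eq hc.symm))).1 hc.le ha hb

lemma exists_adj_ne_of_degB_ne_one (hc : degB T c ≠ 1) (hv : T.Adj c v) :
    ∃ d, T.Adj c d ∧ d ≠ v := by
  by_contra! hall
  exact hc (Set.ncard_eq_one.2 ⟨v, Set.eq_singleton_iff_unique_mem.2 ⟨hv, hall⟩⟩)

lemma side_eq_singleton (h : T.Adj v c) (hc : degB T c = 1) : side T v c = {c} := by
  refine Set.eq_singleton_iff_unique_mem.2 ⟨mem_side_self, fun w hw => ?_⟩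
  obtain ⟨p⟩ := (mem_side_iff.1 hw).symm
  cases p with
  | nil => rfl
  | cons hd _ =>
    obtain ⟨hcd, hne⟩ := deleteEdges_adj.1 hd
    exact absurd (by rw [eq_of_adj_of_degB_eq_one hc hcd h.symm, Sym2.eq_swap]; rfl) hne

lemma eq_or_eq_of_mem_support_of_degB_eq_one {p : T.Walk a b} (hp : p.IsPath) {z : V}
    (hz : z ∈ p.support) (hdeg : degB T z = 1) : z = a ∨ z = b := by
  obtain ⟨k, rfl, hk⟩ := Walk.mem_support_iff_exists_getVert.1 hz
  by_contra! hne
  have hk0 : k ≠ 0 := fun h => hne.1 (by simp [h])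
  have hklt : k < p.length := lt_of_le_of_ne hk fun h => hne.2 (by simp [h])
  have htwo := hp.ncard_neighborSet_toSubgraph_internal_eq_two hk0 hklt
  have hle : _ ≤ degB T (p.getVert k) :=
    Set.ncard_le_ncard (p.toSubgraph.neighborSet_subset (p.getVert k))
      (Set.finite_of_ncard_pos (one_pos.trans_eq hdeg.symm))
  omega

/-- A vertex set that the edges of `T` leave only through `v`. -/
structure IsBranchAt (T : SimpleGraph V) (X : Set V) (v : V) : Prop where
  root_mem : v ∈ X
  mem_of_adj : ∀ a ∈ X, a ≠ v → ∀ b, T.Adj a b → b ∈ X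

lemma isBranchAt_side : IsBranchAt T (side T v c) c where
  root_mem := mem_side_self
  mem_of_adj _ ha hne _ hab := (mem_side_or_eq_of_adj ha hab).resolve_right fun e => hne e.1

lemma isBranchAt_insert_side : IsBranchAt T (insert v (side T v c)) v where
  root_mem := Set.mem_insert _ _
  mem_of_adj _ ha hne _ hab := ((mem_side_or_eq_of_adj (ha.resolve_left hne) hab).imp_right
    And.right).symm

namespace IsBranchAt

variable {X : Set V}

lemma diff_side (hT : T.IsAcyclic) (hX : IsBranchAt T X v) (h : T.Adj v c) :
    IsBranchAt T (X \ side T v c) v where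
  root_mem := ⟨hX.root_mem, notMem_side hT h⟩
  mem_of_adj a ha hne b hab := ⟨hX.mem_of_adj a ha.1 hne b hab, fun hb =>
    (mem_side_or_eq_of_adj hb hab.symm).elim ha.2 fun e => hne e.2⟩

lemma side_subset (hT : T.IsAcyclic) (hX : IsBranchAt T X v) (h : T.Adj v c) (hw : w ∈ X)
    (hws : w ∈ side T v c) : side T v c ⊆ X := by
  intro z hz
  obtain ⟨p, -, hp⟩ := exists_isPath_forall_mem preconnected_induce_side hws hz
  induction p with
  | nil => exact hw
  | cons hab q ih =>
    simp only [Walk.support_cons, List.forall_mem_cons] at hp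
    exact ih (hX.mem_of_adj _ hw (ne_of_mem_of_not_mem hws (notMem_side hT h)) _ hab)
      (hp.2 _ q.start_mem_support) hz hp.2

end IsBranchAt

lemma exists_mem_side_degB_eq_one [Finite V] (hT : T.IsAcyclic) (h : T.Adj v c) :
    ∃ w ∈ side T v c, degB T w = 1 := by
  induction hN : (side T v c).ncard using Nat.strong_induction_on generalizing v c with
  | _ N ih =>
    by_cases hc : degB T c = 1
    · exact ⟨c, mem_side_self, hc⟩
    obtain ⟨d, hcd, hdv⟩ := exists_adj_ne_of_degB_ne_one hc h.symm
    have hd : d ∈ side T v c :=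
      (mem_side_or_eq_of_adj mem_side_self hcd).resolve_right fun e => hdv e.2
    have hsub : side T c d ⊆ side T v c := isBranchAt_side.side_subset hT hcd hd mem_side_self
    have hlt : (side T c d).ncard < N := hN ▸ Set.ncard_lt_ncard
      (hsub.ssubset_of_mem_notMem mem_side_self (notMem_side hT hcd)) (Set.toFinite _)
    obtain ⟨w, hw, hdeg⟩ := ih _ hlt hcd rfl
    exact ⟨w, hsub hw, hdeg⟩

end Branches

section LeafCycles

variable {V : Type} {T C : SimpleGraph V} {l : ℕ → V} {n : ℕ}

/-- `C` is a cycle through exactly the leaves of `T`, visiting `l 0, l 1, …, l n = l 0` in this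
order. -/
structure LeafCycle (T C : SimpleGraph V) (l : ℕ → V) (n : ℕ) : Prop where
  three_le : 3 ≤ n
  apply_length : l n = l 0
  injOn : Set.InjOn l (Set.Iio n)
  degB_eq_one : ∀ k, degB T (l k) = 1
  exists_eq : ∀ x, degB T x = 1 → ∃ k < n, l k = x
  adj_iff : ∀ a b, C.Adj a b ↔ ∃ k < n, s(a, b) = s(l k, l (k + 1))

lemma LeafCycle.exists_walk (hl : LeafCycle T C l n) {s t : ℕ} (hst : s ≤ t) (ht : t ≤ n) :
    ∃ p : C.Walk (l s) (l t), ∀ z ∈ p.support, z ∈ l '' Set.Icc s t := by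
  induction t, hst using Nat.le_induction with
  | base => exact ⟨.nil, by simp⟩
  | succ t hst ih =>
    obtain ⟨p, hp⟩ := ih (by omega)
    refine ⟨p.concat ((hl.adj_iff _ _).2 ⟨t, by omega, rfl⟩), fun z hz => ?_⟩
    rw [Walk.support_concat, List.mem_append, List.mem_singleton] at hz
    rcases hz with hz | rfl
    · exact Set.image_mono (Set.Icc_subset_Icc_right t.le_succ) (hp z hz)
    · exact Set.mem_image_of_mem l ⟨by omega, le_rfl⟩

variable [Finite V]

lemma neighborSet_eq_empty_of_degB_eq_zero {v : V} (h : degB C v = 0) : C.neighborSet v = ∅ :=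
  (Set.ncard_eq_zero (Set.toFinite _)).1 h

lemma isCycles_of_degB_eq_two_or_eq_zero (h : ∀ v, degB C v = 2 ∨ degB C v = 0) : C.IsCycles :=
  fun v hv => (h v).resolve_right fun h0 =>
    hv.ne_empty (neighborSet_eq_empty_of_degB_eq_zero h0)

lemma leafCycle_getVert {ρ : V} {p : C.Walk ρ ρ} (hp : p.IsCycle) (hC : C.IsCycles)
    (hverts : ∀ v, v ∈ p.support ↔ degB T v = 1) (hleaf : ∀ a b, C.Adj a b → degB T a = 1) :
    LeafCycle T C p.getVert p.length where
  three_le := hp.three_le_length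
  apply_length := by simp
  injOn := hp.getVert_injOn'.mono fun i (hi : i < p.length) => Nat.le_sub_one_of_lt hi
  degB_eq_one k := (hverts _).1 (p.getVert_mem_support k)
  exists_eq x hx := by
    obtain ⟨k, rfl, hk⟩ := Walk.mem_support_iff_exists_getVert.1 ((hverts x).2 hx)
    rcases hk.lt_or_eq with hk | rfl
    · exact ⟨k, hk, rfl⟩
    · exact ⟨0, by have := hp.three_le_length; omega, by simp⟩
  adj_iff a b := by
    classical
    have := Fintype.ofFinite V
    have adj_of_eq : (∃ k < p.length, s(a, b) = s(p.getVert k, p.getVert (k + 1))) ↔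
        p.toSubgraph.Adj a b := by
      simp only [Walk.toSubgraph_adj_iff, and_comm, eq_comm]
    rw [adj_of_eq]
    refine ⟨fun hab => ?_, fun hab => p.toSubgraph.adj_sub hab⟩
    refine (hp.adj_toSubgraph_iff_of_isCycles hC ?_ b).2 hab
    exact p.mem_verts_toSubgraph.2 ((hverts a).2 (hleaf a b hab))

lemma exists_leafCycle (h2 : ∀ v, degB T v = 1 → degB C v = 2)
    (h0 : ∀ v, degB T v ≠ 1 → degB C v = 0)
    (hconn : (C.induce {v | degB T v = 1}).Connected) : ∃ l n, LeafCycle T C l n := by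
  obtain ⟨ρ, hρ⟩ := hconn.nonempty
  have hC : C.IsCycles :=
    isCycles_of_degB_eq_two_or_eq_zero fun v => (em _).imp (h2 v) (h0 v)
  have hleaf : ∀ a b, C.Adj a b → degB T a = 1 := fun a b hab => by
    by_contra h
    exact (neighborSet_eq_empty_of_degB_eq_zero (h0 a h)).subset hab
  have hne : (C.neighborSet ρ).Nonempty := Set.nonempty_of_ncard_ne_zero (by
    rw [← degB, h2 ρ hρ]
    exact two_ne_zero)
  obtain ⟨p, hp, hverts⟩ := hC.exists_cycle_toSubgraph_verts_eq_connectedComponentSupp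
    (c := C.connectedComponentMk ρ) rfl hne
  refine ⟨_, _, leafCycle_getVert hp hC (fun v => ?_) hleaf⟩
  rw [← Walk.mem_verts_toSubgraph, hverts, ConnectedComponent.mem_supp_iff, ConnectedComponent.eq]
  constructor
  · rintro ⟨q⟩
    cases q with
    | nil => exact hρ
    | cons h _ => exact hleaf _ _ h
  · exact fun hv => (hconn.preconnected ⟨v, hv⟩ ⟨ρ, hρ⟩).map (Embedding.induce _).toHom

end LeafCycles

section Noncrossing

variable {V : Type} {G T C : SimpleGraph V} {l : ℕ → V} {n : ℕ} {v c : V}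

/-- `a` and `b` are joined by a walk of `G` all of whose vertices lie in `S`. -/
def JoinedWithin (G : SimpleGraph V) (S : Set V) (a b : V) : Prop :=
  ∃ w : G.Walk a b, ∀ z ∈ w.support, z ∈ S

lemma JoinedWithin.symm {S : Set V} {a b : V} (h : JoinedWithin G S a b) :
    JoinedWithin G S b a := by
  obtain ⟨w, hw⟩ := h
  exact ⟨w.reverse, fun z hz => hw z (by simpa using hz)⟩

lemma not_joinedWithin_K33 [Countable V] (emb : StraightEmbedding G) (a b : Fin 3 → V)
    (S : Fin 3 → Fin 3 → Set V)
    (hS : ∀ i j k l, i ≠ k → j ≠ l → Disjoint (S i j) (S k l)) :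
    ¬ ∀ i j, JoinedWithin G (S i j) (a i) (b j) := by
  intro h
  choose w hw using h
  exact not_exists_subdivision_K33 emb a b w fun i j k l hik hjl z hz hz' =>
    (hS i j k l hik hjl).notMem_of_mem_left (hw i j z hz) (hw k l z hz')

/-- The leaves with index in `L` together with the inner vertices of the tree `T` in `R`. -/
def zone (T : SimpleGraph V) (l : ℕ → V) (L : Set ℕ) (R : Set V) : Set V :=
  l '' L ∪ {z ∈ R | degB T z ≠ 1}

/-- The leaves used by the subdivision of `K₃,₃` in `LeafCycle.not_alternating`: the path between
the `a`-th vertex of one class and the `b`-th vertex of the other uses the leaves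
`arcs i m m' n a b` and inner vertices from `treeParts S a b`. -/
def arcs (i m m' n : ℕ) : Fin 3 → Fin 3 → Set ℕ :=
  ![![Set.Icc 0 i, insert 0 (Set.Ico m' n), {0}], ![Set.Icc i m, Set.Icc m m', {m}],
    ![{i}, {m'}, ∅]]

/-- The inner vertices of the tree used by the subdivision of `K₃,₃` described at `arcs`. -/
def treeParts (S : Set V) : Fin 3 → Fin 3 → Set V :=
  ![![∅, ∅, Sᶜ], ![∅, ∅, Sᶜ], ![S, S, Set.univ]]

lemma arcs_subset {i m m' : ℕ} (hi : 0 < i) (him : i < m) (hmm' : m < m') (hn : m' < n)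
    (a b : Fin 3) : arcs i m m' n a b ⊆ Set.Iio n := by
  intro k
  fin_cases a <;> fin_cases b <;> simp [arcs] <;> omega

lemma disjoint_arcs {i m m' : ℕ} (hi : 0 < i) (him : i < m) (hmm' : m < m') {a b a' b' : Fin 3}
    (ha : a ≠ a') (hb : b ≠ b') : Disjoint (arcs i m m' n a b) (arcs i m m' n a' b') := by
  rw [Set.disjoint_left]
  intro k
  fin_cases a <;> fin_cases a' <;> first
    | exact absurd rfl ha
    | fin_cases b <;> fin_cases b' <;> first
      | exact absurd rfl hb
      | simp [arcs] <;> omega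

lemma disjoint_treeParts (S : Set V) {a b a' b' : Fin 3} (ha : a ≠ a') (hb : b ≠ b') :
    Disjoint (treeParts S a b) (treeParts S a' b') := by
  fin_cases a <;> fin_cases a' <;> first
    | exact absurd rfl ha
    | fin_cases b <;> fin_cases b' <;> first
      | exact absurd rfl hb
      | simp [treeParts, disjoint_compl_left, disjoint_compl_right]

lemma joinedWithin_tree {s : ℕ} {R : Set V} (hR : (T.induce R).Preconnected) (hs : l s ∈ R)
    (hv : v ∈ R) (hdeg : degB T v ≠ 1) : JoinedWithin (T ⊔ C) (zone T l {s} R) (l s) v := by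
  obtain ⟨p, hp, hpR⟩ := exists_isPath_forall_mem hR hs hv
  refine ⟨p.mapLe le_sup_left, fun z hz => ?_⟩
  rw [Walk.support_mapLe_eq_support] at hz
  by_cases hz1 : degB T z = 1
  · rcases eq_or_eq_of_mem_support_of_degB_eq_one hp hz hz1 with rfl | rfl
    · exact .inl ⟨s, rfl, rfl⟩
    · exact absurd hz1 hdeg
  · exact .inr ⟨hpR z hz, hz1⟩

namespace LeafCycle

lemma disjoint_zone (hl : LeafCycle T C l n) {L L' : Set ℕ} {R R' : Set V} (hL : L ⊆ Set.Iio n)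
    (hL' : L' ⊆ Set.Iio n) (hLL' : Disjoint L L') (hRR' : Disjoint R R') :
    Disjoint (zone T l L R) (zone T l L' R') := by
  have disjoint_inner : ∀ (K : Set ℕ) (S : Set V), Disjoint (l '' K) {z ∈ S | degB T z ≠ 1} := by
    rintro K S
    rw [Set.disjoint_left]
    rintro _ ⟨k, -, rfl⟩ hk
    exact hk.2 (hl.degB_eq_one k)
  have disjoint_leaves : Disjoint (l '' L) (l '' L') := by
    rw [Set.disjoint_iff_inter_eq_empty, ← hl.injOn.image_inter hL hL', hLL'.inter_eq,
      Set.image_empty]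
  simp only [zone, Set.disjoint_union_left, Set.disjoint_union_right]
  exact ⟨⟨disjoint_leaves, (disjoint_inner _ _).symm⟩, disjoint_inner _ _,
    hRR'.mono (Set.sep_subset _ _) (Set.sep_subset _ _)⟩

lemma joinedWithin_arc (hl : LeafCycle T C l n) {s t : ℕ} {L : Set ℕ} {R : Set V} (hst : s ≤ t)
    (ht : t ≤ n) (hL : l '' Set.Icc s t ⊆ l '' L) :
    JoinedWithin (T ⊔ C) (zone T l L R) (l s) (l t) := by
  obtain ⟨p, hp⟩ := hl.exists_walk hst ht
  refine ⟨p.mapLe le_sup_right, fun z hz => .inl (hL (hp z ?_))⟩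
  rwa [Walk.support_mapLe_eq_support] at hz

/-- Two leaves in each part of a partition of `T` by an edge `vc` cannot alternate on the leaf
cycle: the four arcs between them and the tree paths joining them to `v` and `c` would
subdivide `K₃,₃`. -/
lemma not_alternating [Countable V] (hl : LeafCycle T C l n) (emb : StraightEmbedding (T ⊔ C))
    {S : Set V} (hS : (T.induce S).Preconnected) (hS' : (T.induce Sᶜ).Preconnected)
    (hvc : T.Adj v c) (hc : c ∈ S) (hv : v ∈ Sᶜ) (hcdeg : degB T c ≠ 1) (hvdeg : degB T v ≠ 1)
    {i m m' : ℕ} (hi : 0 < i) (him : i < m) (hmm' : m < m') (hn : m' < n)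
    (h0S : l 0 ∈ Sᶜ) (hiS : l i ∈ S) (hmS : l m ∈ Sᶜ) : l m' ∉ S := by
  intro hm'S
  refine not_joinedWithin_K33 emb ![l 0, l m, c] ![l i, l m', v]
    (fun a b => zone T l (arcs i m m' n a b) (treeParts S a b)) (fun a b a' b' ha hb =>
      hl.disjoint_zone (arcs_subset hi him hmm' hn a b) (arcs_subset hi him hmm' hn a' b')
        (disjoint_arcs hi him hmm' ha hb) (disjoint_treeParts S ha hb)) fun a b => ?_
  have last_arc : l '' Set.Icc m' n ⊆ l '' insert 0 (Set.Ico m' n) := by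
    rw [← Set.Ico_insert_right hn.le, Set.image_insert_eq, Set.image_insert_eq, hl.apply_length]
  have edge_vc : JoinedWithin (T ⊔ C) (zone T l ∅ Set.univ) c v := by
    refine ⟨((le_sup_left : T ≤ T ⊔ C) hvc.symm).toWalk, fun z hz => .inr ⟨trivial, ?_⟩⟩
    rcases List.mem_pair.1 hz with rfl | rfl
    exacts [hcdeg, hvdeg]
  fin_cases a <;> fin_cases b
  · exact hl.joinedWithin_arc hi.le (by omega) subset_rfl
  · exact hl.apply_length ▸ (hl.joinedWithin_arc hn.le le_rfl last_arc).symm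
  · exact joinedWithin_tree hS' h0S hv hvdeg
  · exact (hl.joinedWithin_arc him.le (by omega) subset_rfl).symm
  · exact hl.joinedWithin_arc hmm'.le hn.le subset_rfl
  · exact joinedWithin_tree hS' hmS hv hvdeg
  · exact (joinedWithin_tree hS hiS hc hcdeg).symm
  · exact (joinedWithin_tree hS hm'S hc hcdeg).symm
  · exact edge_vc

end LeafCycle

lemma degB_ne_one_of_mem_side (h : T.Adj v c) {a b : V} (ha : a ∈ side T v c)
    (hb : b ∈ side T v c) (hab : a ≠ b) : degB T c ≠ 1 := fun hc => by
  rw [side_eq_singleton h hc] at ha hb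
  exact hab (ha.trans hb.symm)

/-- Every branch of `T` that avoids `l 0` contains a run of consecutive leaves. -/
def Noncrossing (T : SimpleGraph V) (l : ℕ → V) (n : ℕ) : Prop :=
  ∀ v c, T.Adj v c → l 0 ∉ side T v c → (Set.Iio n ∩ l ⁻¹' side T v c).OrdConnected

lemma LeafCycle.noncrossing [Countable V] (hT : T.IsTree) (hl : LeafCycle T C l n)
    (emb : StraightEmbedding (T ⊔ C)) : Noncrossing T l n := by
  intro v c hvc h0
  refine ⟨fun i hi m' hm' m hm => ⟨hm.2.trans_lt hm'.1, ?_⟩⟩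
  by_contra hmc
  have hi0 : 0 < i := Nat.pos_of_ne_zero fun h => h0 (h ▸ hi.2)
  have him : i < m := lt_of_le_of_ne hm.1 fun h => hmc (h ▸ hi.2)
  have hmm' : m < m' := lt_of_le_of_ne hm.2 fun h => hmc (h ▸ hm'.2)
  have hn : m' < n := hm'.1
  have apply_ne : ∀ {s t}, s < t → t < n → l s ≠ l t := fun hst ht h =>
    hst.ne (hl.injOn (hst.trans ht) ht h)
  have hcompl : side T c v = (side T v c)ᶜ := Set.ext fun _ => mem_side_swap_iff hT hvc
  have hc : degB T c ≠ 1 :=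
    degB_ne_one_of_mem_side hvc hi.2 hm'.2 (apply_ne (him.trans hmm') hn)
  have hv : degB T v ≠ 1 := degB_ne_one_of_mem_side hvc.symm (a := l 0) (b := l m)
    (hcompl ▸ h0) (hcompl ▸ hmc) (apply_ne (hi0.trans him) (hmm'.trans hn))
  exact hl.not_alternating emb preconnected_induce_side (hcompl ▸ preconnected_induce_side) hvc
    mem_side_self (notMem_side hT.2 hvc) hc hv hi0 him hmm' hn h0 hi.2 hmc hm'.2

end Noncrossing

section Pieces

variable {V : Type} {T C : SimpleGraph V} {l : ℕ → V} {n : ℕ} {X : Set V} {v c : V} {i j k : ℕ}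

/-- A branch of `T` at an inner vertex `v` whose leaves are `l i, …, l j`. -/
structure IsPiece (T : SimpleGraph V) (l : ℕ → V) (n : ℕ) (X : Set V) (v : V) (i j : ℕ) : Prop
    extends IsBranchAt T X v where
  degB_ne_one : degB T v ≠ 1
  pos : 0 < i
  le : i ≤ j
  lt : j < n
  mem_iff : ∀ k < n, l k ∈ X ↔ i ≤ k ∧ k ≤ j

namespace IsPiece

lemma left_mem (hX : IsPiece T l n X v i j) : l i ∈ X :=
  (hX.mem_iff i (hX.le.trans_lt hX.lt)).2 ⟨le_rfl, hX.le⟩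

lemma right_mem (hX : IsPiece T l n X v i j) : l j ∈ X :=
  (hX.mem_iff j hX.lt).2 ⟨hX.le, le_rfl⟩

lemma zero_notMem (hX : IsPiece T l n X v i j) : l 0 ∉ X := fun h =>
  hX.pos.not_ge ((hX.mem_iff 0 (by have := hX.lt; omega)).1 h).1

lemma mem_or_eq_of_adj (hl : LeafCycle T C l n) (hX : IsPiece T l n X v i j) {a b : V}
    (ha : a ∈ X) (hab : (T ⊔ C).Adj a b) :
    b ∈ X ∨ a = v ∨ a = l i ∨ a = l j ∧ b = l (j + 1) := by
  rcases hab with hab | hab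
  · exact (em' (a = v)).imp (fun hav => hX.mem_of_adj a ha hav b hab) .inl
  have hj := hX.lt
  obtain ⟨k, hk, he⟩ := (hl.adj_iff a b).1 hab
  rcases Sym2.eq_iff.1 he with ⟨rfl, rfl⟩ | ⟨rfl, rfl⟩
  · obtain ⟨hik, hkj⟩ := (hX.mem_iff k hk).1 ha
    rcases hkj.lt_or_eq with hkj | rfl
    · exact .inl ((hX.mem_iff _ (by omega)).2 ⟨by omega, hkj⟩)
    · exact .inr (.inr (.inr ⟨rfl, rfl⟩))
  · have hkn : k + 1 < n := by
      refine lt_of_le_of_ne hk fun hkn => hX.zero_notMem ?_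
      rwa [hkn, hl.apply_length] at ha
    obtain ⟨hik, hkj⟩ := (hX.mem_iff _ hkn).1 ha
    rcases hik.lt_or_eq with hik | rfl
    · exact .inl ((hX.mem_iff k hk).2 ⟨by omega, by omega⟩)
    · exact .inr (.inr (.inl rfl))

lemma addBag (hl : LeafCycle T C l n) (hX : IsPiece T l n X v i j)
    (h : HasRootedDecomp (T ⊔ C) 3 X {v, l i, l j}) {w : V} (hw : w ∉ X) :
    HasRootedDecomp (T ⊔ C) 3 (insert w X) {w, v, l i, l j} := by
  classical
  have hbag : ({v, l i, l j} : Set V) ⊆ X := by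
    rintro _ (rfl | rfl | rfl)
    exacts [hX.root_mem, hX.left_mem, hX.right_mem]
  have hcard : ({w, v, l i, l j} : Set V).ncard ≤ 3 + 1 := by
    simpa [← Set.ncard_coe_finset] using Finset.card_le_four (a := w) (b := v) (c := l i) (d := l j)
  have hunion : {w, v, l i, l j} ∪ X = insert w X := by
    rw [Set.insert_union, Set.union_eq_self_of_subset_left hbag]
  rw [← hunion]
  refine h.addBag hcard ?_ fun a _ x hx hax => ?_
  · rintro x ⟨rfl | hx, hxX⟩
    exacts [absurd hxX hw, hx]
  · rcases hX.mem_or_eq_of_adj hl hx hax.symm with ha | rfl | rfl | ⟨rfl, -⟩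
    · exact .inr ha
    all_goals simp

lemma exists_insert_side (hT : T.IsAcyclic) (hN : Noncrossing T l n)
    (hleaf : ∀ k, degB T (l k) = 1) (hX : IsPiece T l n X v i j) (hc : T.Adj v c)
    (hi : l i ∈ side T v c) : ∃ k ≤ j, IsPiece T l n (insert v (side T v c)) v i k := by
  have hsub := hX.side_subset hT hc hX.left_mem hi
  let J := Set.Iio n ∩ l ⁻¹' side T v c
  have hconn : J.OrdConnected := hN v c hc fun h => hX.zero_notMem (hsub h)
  have hJ : ∀ m ∈ J, i ≤ m ∧ m ≤ j := fun m hm => (hX.mem_iff m hm.1).1 (hsub hm.2)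
  have hiJ : i ∈ J := ⟨hX.le.trans_lt hX.lt, hi⟩
  obtain ⟨k, hk, hmax⟩ := Set.exists_max_image J id ((Set.finite_Iio n).inter_of_left _) ⟨i, hiJ⟩
  refine ⟨k, (hJ k hk).2, isBranchAt_insert_side, hX.degB_ne_one, hX.pos, (hJ k hk).1, hk.1, ?_⟩
  intro m hm
  have hmv : l m ≠ v := fun h => hX.degB_ne_one (h ▸ hleaf m)
  rw [Set.mem_insert_iff, or_iff_right hmv]
  exact ⟨fun h => ⟨(hJ m ⟨hm, h⟩).1, hmax m ⟨hm, h⟩⟩, fun h => (hconn.out hiJ hk h).2⟩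

lemma insert_side_subset (hT : T.IsAcyclic) (hX : IsPiece T l n X v i j) (hc : T.Adj v c)
    (hi : l i ∈ side T v c) : insert v (side T v c) ⊆ X :=
  Set.insert_subset hX.root_mem (hX.side_subset hT hc hX.left_mem hi)

lemma apply_mem_side_iff (hleaf : ∀ k, degB T (l k) = 1)
    (h₁ : IsPiece T l n (insert v (side T v c)) v i k) {m : ℕ} (hm : m < n) :
    l m ∈ side T v c ↔ i ≤ m ∧ m ≤ k := by
  rw [← h₁.mem_iff m hm, Set.mem_insert_iff, or_iff_right]
  exact fun h => h₁.degB_ne_one (h ▸ hleaf m)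

lemma diff_side (hT : T.IsAcyclic) (hleaf : ∀ k, degB T (l k) = 1) (hX : IsPiece T l n X v i j)
    (hc : T.Adj v c) (h₁ : IsPiece T l n (insert v (side T v c)) v i k) (hkj : k < j) :
    IsPiece T l n (X \ side T v c) v (k + 1) j where
  toIsBranchAt := hX.toIsBranchAt.diff_side hT hc
  degB_ne_one := hX.degB_ne_one
  pos := k.succ_pos
  le := hkj
  lt := hX.lt
  mem_iff m hm := by
    have hik := h₁.le
    rw [Set.mem_sdiff, hX.mem_iff m hm, h₁.apply_mem_side_iff hleaf hm]
    omega

lemma of_insert_side (hleaf : ∀ k, degB T (l k) = 1)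
    (h₁ : IsPiece T l n (insert v (side T v c)) v i k) (hc : degB T c ≠ 1) :
    IsPiece T l n (side T v c) c i k where
  toIsBranchAt := isBranchAt_side
  degB_ne_one := hc
  pos := h₁.pos
  le := h₁.le
  lt := h₁.lt
  mem_iff _ := h₁.apply_mem_side_iff hleaf

lemma eq_insert_side [Finite V] (hT : T.IsTree) (hl : LeafCycle T C l n)
    (hX : IsPiece T l n X v i j) (hc : T.Adj v c)
    (h₁ : IsPiece T l n (insert v (side T v c)) v i j) : X = insert v (side T v c) := by
  have hle := hX.le
  have hi : l i ∈ side T v c :=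
    (h₁.apply_mem_side_iff hl.degB_eq_one (hle.trans_lt hX.lt)).2 ⟨le_rfl, hle⟩
  refine Set.Subset.antisymm (fun x hx => ?_) (hX.insert_side_subset hT.2 hc hi)
  by_contra hxs
  rw [Set.mem_insert_iff, not_or] at hxs
  obtain ⟨d, hd, hxd⟩ := exists_adj_mem_side hT.1.preconnected hxs.1
  have hsub : side T v d ⊆ X \ side T v c :=
    (hX.toIsBranchAt.diff_side hT.2 hc).side_subset hT.2 hd ⟨hx, hxs.2⟩ hxd
  obtain ⟨w, hw, hdeg⟩ := exists_mem_side_degB_eq_one hT.2 hd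
  obtain ⟨m, hm, rfl⟩ := hl.exists_eq w hdeg
  exact (hsub hw).2 ((h₁.apply_mem_side_iff hl.degB_eq_one hm).2 ((hX.mem_iff m hm).1 (hsub hw).1))

lemma hasRootedDecomp_insert_side (hT : T.IsAcyclic) (hl : LeafCycle T C l n) (hc : T.Adj v c)
    (hX : IsPiece T l n (insert v (side T v c)) v i j)
    (ih : IsPiece T l n (side T v c) c i j →
      HasRootedDecomp (T ⊔ C) 3 (side T v c) {c, l i, l j}) :
    HasRootedDecomp (T ⊔ C) 3 (insert v (side T v c)) {v, l i, l j} := by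
  by_cases hleaf : degB T c = 1
  · refine HasRootedDecomp.mono (hasRootedDecomp_self ?_) ?_
    · rw [side_eq_singleton hc hleaf]
      exact (Set.ncard_insert_le v {c}).trans (by simp)
    · rintro _ (rfl | rfl | rfl)
      exacts [hX.root_mem, hX.left_mem, hX.right_mem]
  · have hc' := hX.of_insert_side hl.degB_eq_one hleaf
    exact (hc'.addBag hl (ih hc') (notMem_side hT hc)).mono
      (Set.insert_subset_insert (Set.subset_insert _ _))

/-- The bags `{v, l i, l k, l (k+1)}` and `{v, l i, l (k+1), l j}` join the decompositions of the
two parts. -/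
lemma hasRootedDecomp_of_diff_side (hT : T.IsAcyclic) (hl : LeafCycle T C l n)
    (hX : IsPiece T l n X v i j) (hc : T.Adj v c)
    (h₁ : IsPiece T l n (insert v (side T v c)) v i k) (hkj : k < j)
    (hD₁ : HasRootedDecomp (T ⊔ C) 3 (insert v (side T v c)) {v, l i, l k})
    (hD₂ : HasRootedDecomp (T ⊔ C) 3 (X \ side T v c) {v, l (k + 1), l j}) :
    HasRootedDecomp (T ⊔ C) 3 X {v, l i, l j} := by
  have h₂ := hX.diff_side hT hl.degB_eq_one hc h₁ hkj
  have hi : l i ∈ side T v c :=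
    (h₁.apply_mem_side_iff hl.degB_eq_one (h₁.le.trans_lt h₁.lt)).2 ⟨le_rfl, h₁.le⟩
  have hk : l (k + 1) ∉ insert v (side T v c) := fun h =>
    ((h₁.mem_iff _ (by have := hX.lt; omega)).1 h).2.not_gt k.lt_succ_self
  have hunion : insert (l i) (X \ side T v c) ∪ insert (l (k + 1)) (insert v (side T v c)) = X := by
    apply Set.Subset.antisymm
    · exact Set.union_subset (Set.insert_subset hX.left_mem Set.sdiff_subset)
        (Set.insert_subset h₂.left_mem.1 (hX.insert_side_subset hT hc hi))
    · intro x hx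
      by_cases hxs : x ∈ side T v c
      · exact .inr (.inr (.inr hxs))
      · exact .inl (.inr ⟨hx, hxs⟩)
  rw [← hunion]
  refine ((h₂.addBag hl hD₂ fun h => h.2 hi).glue (h₁.addBag hl hD₁ hk) ?_ ?_).mono ?_
  · rintro x ⟨rfl | hx, hx'⟩
    · simp
    rcases hx' with rfl | rfl | hxs
    · simp
    · simp
    · exact absurd hxs hx.2
  · rintro a (rfl | ha) b (rfl | hb) hab
    · exact .inl (.inr h₂.left_mem)
    · exact .inr (.inr h₁.left_mem)
    · exact .inl (.inr h₂.left_mem)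
    · rcases h₁.mem_or_eq_of_adj hl hb hab.symm with h | rfl | rfl | ⟨-, rfl⟩
      · exact .inr (.inr h)
      · exact .inl (.inr h₂.root_mem)
      · exact .inl (.inl rfl)
      · exact .inr (.inl rfl)
  · rintro _ (rfl | rfl | rfl) <;> simp

theorem hasRootedDecomp [Finite V] (hT : T.IsTree) (hl : LeafCycle T C l n)
    (hN : Noncrossing T l n) (hX : IsPiece T l n X v i j) :
    HasRootedDecomp (T ⊔ C) 3 X {v, l i, l j} := by
  induction hcard : X.ncard using Nat.strong_induction_on generalizing X v i j with
  | _ N ih =>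
    have rec_of_ssubset : ∀ {Y u i j}, Y ⊂ X → IsPiece T l n Y u i j →
        HasRootedDecomp (T ⊔ C) 3 Y {u, l i, l j} := fun hYX hY =>
      ih _ (hcard ▸ Set.ncard_lt_ncard hYX (Set.toFinite _)) hY rfl
    have hiv : l i ≠ v := fun h => hX.degB_ne_one (h ▸ hl.degB_eq_one i)
    obtain ⟨c, hc, hi⟩ := exists_adj_mem_side hT.1.preconnected hiv
    have hsub := hX.insert_side_subset hT.2 hc hi
    obtain ⟨k, hkj, h₁⟩ := hX.exists_insert_side hT.2 hN hl.degB_eq_one hc hi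
    rcases hkj.lt_or_eq with hkj | rfl
    · have h₂ := hX.diff_side hT.2 hl.degB_eq_one hc h₁ hkj
      refine hX.hasRootedDecomp_of_diff_side hT.2 hl hc h₁ hkj (rec_of_ssubset ?_ h₁)
        (rec_of_ssubset ?_ h₂)
      · exact hsub.ssubset_of_mem_notMem hX.right_mem fun h =>
          hkj.not_ge ((h₁.mem_iff j hX.lt).1 h).2
      · exact Set.sdiff_subset.ssubset_of_mem_notMem hX.left_mem fun h => h.2 hi
    · obtain rfl := hX.eq_insert_side hT hl hc h₁
      exact hX.hasRootedDecomp_insert_side hT.2 hl hc (rec_of_ssubset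
        ((Set.subset_insert _ _).ssubset_of_mem_notMem hX.root_mem (notMem_side hT.2 hc)))

end IsPiece

lemma isPiece_compl_singleton (hl : LeafCycle T C l n) {t : V} (ht : T.Adj (l 0) t)
    (htdeg : degB T t ≠ 1) : IsPiece T l n {l 0}ᶜ t 1 (n - 1) where
  root_mem := ht.ne'
  mem_of_adj a _ hat b hab := by
    rintro rfl
    exact hat (eq_of_adj_of_degB_eq_one (hl.degB_eq_one 0) hab.symm ht)
  degB_ne_one := htdeg
  pos := one_pos
  le := by have := hl.three_le; omega
  lt := by have := hl.three_le; omega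
  mem_iff k hk := by
    have hk0 : l k = l 0 ↔ k = 0 := hl.injOn.eq_iff hk (k.zero_le.trans_lt hk)
    rw [Set.mem_compl_singleton_iff, ne_eq, hk0]
    omega

lemma LeafCycle.degB_ne_one_of_adj (hT : T.IsTree) (hl : LeafCycle T C l n) {t : V}
    (ht : T.Adj (l 0) t) : degB T t ≠ 1 := by
  have hn := hl.three_le
  have mem_side : ∀ k < n, k ≠ 0 → l k ∈ side T (l 0) t := fun k hk hk0 => by
    rw [mem_side_swap_iff hT ht.symm, side_eq_singleton ht.symm (hl.degB_eq_one 0)]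
    exact fun h => hk0 (hl.injOn hk (by simp; omega) h)
  exact degB_ne_one_of_mem_side ht (mem_side 1 (by omega) one_ne_zero)
    (mem_side 2 (by omega) two_ne_zero) fun h =>
      absurd (hl.injOn (by simp; omega) (by simp; omega) h) (by norm_num)

theorem LeafCycle.treewidthLE_three [Finite V] (hT : T.IsTree) (hl : LeafCycle T C l n)
    (hN : Noncrossing T l n) : TreewidthLE (T ⊔ C) 3 := by
  obtain ⟨t, ht⟩ : (T.neighborSet (l 0)).Nonempty :=
    Set.nonempty_of_ncard_ne_zero (ne_of_eq_of_ne (hl.degB_eq_one 0) one_ne_zero)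
  have hX := isPiece_compl_singleton hl ht (hl.degB_ne_one_of_adj hT ht)
  have h := hX.addBag hl (hX.hasRootedDecomp hT hl hN) (w := l 0) (by simp)
  rw [Set.insert_eq, Set.union_compl_self] at h
  exact h.treewidthLE

end Pieces

section Degrees

variable {V : Type} [Finite V] {T C : SimpleGraph V}

lemma degB_sup (h : ∀ a b, ¬(T.Adj a b ∧ C.Adj a b)) (v : V) :
    degB (T ⊔ C) v = degB T v + degB C v :=
  Set.ncard_union_eq (Set.disjoint_left.2 fun w hT hC => h v w ⟨hT, hC⟩)

lemma degB_pos [Nontrivial V] (hT : T.Preconnected) (v : V) : 0 < degB T v := by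
  obtain ⟨w, hw⟩ := exists_ne v
  obtain ⟨c, hc, -⟩ := exists_adj_mem_side hT hw
  exact (Set.ncard_pos (Set.toFinite _)).2 ⟨c, hc⟩

lemma two_lt_degB_sup [Nontrivial V] (hT : T.Preconnected) (h2 : ∀ v, degB T v ≠ 2)
    (hC : ∀ v, degB T v = 1 → degB C v = 2) (h : ∀ a b, ¬(T.Adj a b ∧ C.Adj a b)) (v : V) :
    2 < degB (T ⊔ C) v := by
  have hpos := degB_pos hT v
  have htwo := h2 v
  have hleaf := hC v
  rw [degB_sup h]
  omega

end Degrees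

end Halin

/-- every Halin graph has treewidth exactly 3. -/
theorem halin_treewidth_eq_three {V : Type} [Fintype V] (G : SimpleGraph V)
    (hG : IsHalin G) : TreewidthLE G 3 ∧ ¬ TreewidthLE G 2 := by
  obtain ⟨T, C, hT, hcard, hdeg, hleaf, hinner, hconn, hdisj, rfl, ⟨emb⟩⟩ := hG
  have : Nontrivial V := Finite.one_lt_card_iff_nontrivial.1 (by omega)
  obtain ⟨l, n, hl⟩ := Halin.exists_leafCycle hleaf hinner hconn
  constructor
  · exact hl.treewidthLE_three hT (hl.noncrossing hT emb)
  · exact Halin.not_treewidthLE_of_lt_degB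
      (Halin.two_lt_degB_sup hT.1.preconnected hdeg hleaf hdisj)
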